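/- Let q be a prime power and let P ⊆ [0,q−2]^n and Q ⊆ [0,q−2]^m be integral convex polytopes with N(P) ≥ 2(q−1)^n/q and N(Q) ≥ 2(q−1)^m/q. Then the relative minimum distance of the toric code of the join satisfies δ(P*Q) = min{ δ(P), δ(Q), δ(P) + δ(Q) − δ(P)·δ(Q)·q/(q−1) }. -/

import Mathlib

open MvPolynomial

/-- The set of zeros of a multivariate polynomial on the torus `((F_q)ˣ)^k`. -/
def torusZeros {K : Type} [Field K] {k : ℕ} (f : MvPolynomial (Fin k) K) :
    Set (Fin k → K) :=
  {a | (∀ i, a i ≠ 0) ∧ MvPolynomial.eval a f = 0}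

/-- `N(S)`: the maximum number of torus zeros of a nonzero polynomial whose
monomial support lies in `S`. -/
noncomputable def maxTorusZeros (K : Type) [Field K] {k : ℕ} (S : Set (Fin k →₀ ℕ)) : ℕ :=
  sSup {z | ∃ f : MvPolynomial (Fin k) K, f ≠ 0 ∧
    (↑f.support : Set (Fin k →₀ ℕ)) ⊆ S ∧ z = (torusZeros f).ncard}

/-- An integral convex polytope: the convex hull of a nonempty finite set of
integer lattice points. -/
def IsIntegralPolytope {n : ℕ} (P : Set (Fin n → ℝ)) : Prop :=
  ∃ V : Finset (Fin n → ℤ), V.Nonempty ∧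
    P = convexHull ℝ ((fun (v : Fin n → ℤ) (i : Fin n) => (v i : ℝ)) '' ↑V)

/-- `P ⊆ [0, q-2]^n`. -/
def InBox (q : ℕ) {n : ℕ} (P : Set (Fin n → ℝ)) : Prop :=
  ∀ x ∈ P, ∀ i, 0 ≤ x i ∧ x i ≤ (q : ℝ) - 2

/-- Lattice points of `P` regarded as exponent vectors. -/
def latticeExps {n : ℕ} (P : Set (Fin n → ℝ)) : Set (Fin n →₀ ℕ) :=
  {d | (fun i => ((d i : ℕ) : ℝ)) ∈ P}

/-- `N(P)`: the maximal number of torus zeros of a nonzero polynomial supported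
on the lattice points of `P`. -/
noncomputable def NP (K : Type) [Field K] {n : ℕ} (P : Set (Fin n → ℝ)) : ℕ :=
  maxTorusZeros K (latticeExps P)

/-- The relative minimum distance `δ(P) = ((q-1)^n - N(P))/(q-1)^n` of the toric code
of `P` over the field `K` with `q` elements. -/
noncomputable def deltaP (K : Type) [Field K] [Fintype K] {n : ℕ}
    (P : Set (Fin n → ℝ)) : ℝ :=
  (((Fintype.card K : ℝ) - 1) ^ n - (NP K P : ℝ)) / ((Fintype.card K : ℝ) - 1) ^ n

/-- `(p, 0^m, 0)` : the embedding of `ℝ^n` into `ℝ^(n+m+1)` used for the join. -/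
def joinEmb₁ (n m : ℕ) (x : Fin n → ℝ) : Fin (n + m + 1) → ℝ :=
  fun k => if h : (k : ℕ) < n then x ⟨k, h⟩ else 0

/-- `(0^n, q, 1)` : the embedding of `ℝ^m` into `ℝ^(n+m+1)` used for the join. -/
def joinEmb₂ (n m : ℕ) (y : Fin m → ℝ) : Fin (n + m + 1) → ℝ :=
  fun k => if h0 : (k : ℕ) < n then 0
    else if h : (k : ℕ) < n + m then y ⟨(k : ℕ) - n, by omega⟩ else 1

/-- The join `P * Q = conv({(p,0,0) : p ∈ P} ∪ {(0,q,1) : q ∈ Q})`. -/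
def joinPolytope {n m : ℕ} (P : Set (Fin n → ℝ)) (Q : Set (Fin m → ℝ)) :
    Set (Fin (n + m + 1) → ℝ) :=
  convexHull ℝ (joinEmb₁ n m '' P ∪ joinEmb₂ n m '' Q)

/-! The general member of the span of the monomials of `P * Q` is `f(x, y, z) = g(x) + z h(y)`, with
`g` and `h` supported on `P` and `Q`. At a torus point `(x, y)`, the equation `f(x, y, z) = 0` has
`q - 1` solutions `z ≠ 0` if `g(x) = h(y) = 0`, one if `g(x)` and `h(y)` are both nonzero, and none
otherwise. Hence the proportions `a` and `b` of torus points where `g` and `h` do not vanish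
determine that of `f`, which is `a + b - a b q / (q - 1)`. This expression is affine in `a` and in
`b`, so on `[δ(P), 1] × [δ(Q), 1]` it is minimal at a corner. At every corner but `(δ(P), δ(Q))` it
is at least its value `2 - q / (q - 1)` at `(1, 1)`, which is at least `1 - 2 / q ≥ δ(P)`. The terms
`δ(P)` and `δ(Q)` of the minimum come from `h = 0` and `g = 0`. -/

section JoinVec

variable {α β : Type*} {n m : ℕ}

/-- The inclusion of the coordinates of `ℝ^n` into those of `ℝ^(n+m+1)`, the ambient space of the
join. -/
def joinInl (n m : ℕ) (i : Fin n) : Fin (n + m + 1) := (i.castAdd m).castSucc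

/-- The inclusion of the coordinates of `ℝ^m` into those of `ℝ^(n+m+1)`, the ambient space of the
join. -/
def joinInr (n m : ℕ) (j : Fin m) : Fin (n + m + 1) := (j.natAdd n).castSucc

theorem forall_fin_join {p : Fin (n + m + 1) → Prop} :
    (∀ k, p k) ↔ (∀ i, p (joinInl n m i)) ∧ (∀ j, p (joinInr n m j)) ∧ p (Fin.last _) := by
  rw [Fin.forall_fin_succ', Fin.forall_fin_add, and_assoc]
  rfl

/-- The splitting of a vector of length `n + m + 1` into blocks of lengths `n`, `m` and `1`, as in
the ambient space of the join. -/
def joinVec : (Fin n → α) × (Fin m → α) × α ≃ (Fin (n + m + 1) → α) where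
  toFun p := Fin.snoc (α := fun _ => α) (Fin.append p.1 p.2.1) p.2.2
  invFun f := (f ∘ joinInl n m, f ∘ joinInr n m, f (Fin.last _))
  left_inv p := by
    ext <;> simp only [joinInl, joinInr, Function.comp_apply, Fin.snoc_castSucc,
      Fin.append_left, Fin.append_right, Fin.snoc_last]
  right_inv f := by
    refine funext (forall_fin_join.2 ⟨fun i => ?_, fun j => ?_, ?_⟩) <;>
      simp only [joinInl, joinInr, Function.comp_def, Fin.snoc_castSucc, Fin.append_left,
        Fin.append_right, Fin.snoc_last]

@[simp]
theorem joinVec_joinInl (p : (Fin n → α) × (Fin m → α) × α) (i : Fin n) :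
    joinVec p (joinInl n m i) = p.1 i :=
  congrFun (congrArg Prod.fst (joinVec.symm_apply_apply p)) i

@[simp]
theorem joinVec_joinInr (p : (Fin n → α) × (Fin m → α) × α) (j : Fin m) :
    joinVec p (joinInr n m j) = p.2.1 j :=
  congrFun (congrArg (fun r => r.2.1) (joinVec.symm_apply_apply p)) j

@[simp]
theorem joinVec_last (p : (Fin n → α) × (Fin m → α) × α) :
    joinVec p (Fin.last _) = p.2.2 :=
  congrArg (fun r => r.2.2) (joinVec.symm_apply_apply p)

theorem eq_joinVec_iff {f : Fin (n + m + 1) → α} {p : (Fin n → α) × (Fin m → α) × α} :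
    f = joinVec p ↔
      (∀ i, f (joinInl n m i) = p.1 i) ∧ (∀ j, f (joinInr n m j) = p.2.1 j) ∧
        f (Fin.last _) = p.2.2 := by
  rw [funext_iff, forall_fin_join]
  simp only [joinVec_joinInl, joinVec_joinInr, joinVec_last]

theorem comp_joinVec (φ : α → β) (x : Fin n → α) (y : Fin m → α) (z : α) :
    φ ∘ joinVec (x, y, z) = joinVec (φ ∘ x, φ ∘ y, φ z) := by
  simp [eq_joinVec_iff]

theorem smul_joinVec_add_smul_joinVec {R : Type*} [Add α] [SMul R α] (a b : R)
    (p p' : (Fin n → α) × (Fin m → α) × α) :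
    a • joinVec p + b • joinVec p' = joinVec (a • p + b • p') := by
  simp [eq_joinVec_iff]

theorem joinInl_injective (n m : ℕ) : Function.Injective (joinInl n m) :=
  (Fin.castSucc_injective _).comp (Fin.castAdd_injective n m)

theorem joinInr_injective (n m : ℕ) : Function.Injective (joinInr n m) :=
  (Fin.castSucc_injective _).comp (Fin.natAdd_injective m n)

theorem joinInl_ne_joinInr (i : Fin n) (j : Fin m) : joinInl n m i ≠ joinInr n m j :=
  (Fin.castSucc_injective _).ne
    (Fin.ne_of_lt ((Fin.castAdd_lt m i).trans_le (Fin.le_coe_natAdd n j)))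

theorem joinInl_ne_last (i : Fin n) : joinInl n m i ≠ Fin.last _ :=
  (Fin.castSucc_lt_last _).ne

theorem joinInr_ne_last (j : Fin m) : joinInr n m j ≠ Fin.last _ :=
  (Fin.castSucc_lt_last _).ne

end JoinVec

section Exponents

variable {n m : ℕ}

/-- The exponents of the monomials `x^s` with `s ∈ S` and `z y^t` with `t ∈ T` in the variables
`(x, y, z)`: the lattice points of the join, when `S` and `T` are those of its two factors. -/
def joinExps (S : Set (Fin n →₀ ℕ)) (T : Set (Fin m →₀ ℕ)) : Set (Fin (n + m + 1) →₀ ℕ) :=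
  Finsupp.mapDomain (joinInl n m) '' S ∪
    (fun t => Finsupp.single (Fin.last _) 1 + Finsupp.mapDomain (joinInr n m) t) '' T

theorem coe_mapDomain_joinInl (s : Fin n →₀ ℕ) :
    ⇑(Finsupp.mapDomain (joinInl n m) s) = joinVec (⇑s, 0, 0) := by
  refine eq_joinVec_iff.2 ⟨Finsupp.mapDomain_apply (joinInl_injective n m) s, fun j => ?_, ?_⟩
  · exact Finsupp.mapDomain_of_notMem_range _ _ fun ⟨i, hi⟩ => joinInl_ne_joinInr i j hi
  · exact Finsupp.mapDomain_of_notMem_range _ _ fun ⟨i, hi⟩ => joinInl_ne_last i hi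

theorem coe_mapDomain_joinInr (t : Fin m →₀ ℕ) :
    ⇑(Finsupp.mapDomain (joinInr n m) t) = joinVec (0, ⇑t, 0) := by
  refine eq_joinVec_iff.2 ⟨fun i => ?_, Finsupp.mapDomain_apply (joinInr_injective n m) t, ?_⟩
  · exact Finsupp.mapDomain_of_notMem_range _ _ fun ⟨j, hj⟩ => joinInl_ne_joinInr i j hj.symm
  · exact Finsupp.mapDomain_of_notMem_range _ _ fun ⟨j, hj⟩ => joinInr_ne_last j hj

theorem coe_single_last_add_mapDomain_joinInr (t : Fin m →₀ ℕ) :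
    ⇑(Finsupp.single (Fin.last _) 1 + Finsupp.mapDomain (joinInr n m) t : _ →₀ ℕ) =
      joinVec (0, ⇑t, 1) := by
  rw [Finsupp.coe_add, coe_mapDomain_joinInr]
  simp [eq_joinVec_iff, joinInl_ne_last, joinInr_ne_last]

theorem exists_coe_eq_joinVec (d : Fin (n + m + 1) →₀ ℕ) :
    ∃ (s : Fin n →₀ ℕ) (t : Fin m →₀ ℕ) (k : ℕ), ⇑d = joinVec (⇑s, ⇑t, k) := by
  obtain ⟨⟨s, t, k⟩, hd⟩ := joinVec.surjective ⇑d
  exact ⟨Finsupp.equivFunOnFinite.symm s, Finsupp.equivFunOnFinite.symm t, k, hd.symm⟩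

theorem mem_joinExps_iff {S : Set (Fin n →₀ ℕ)} {T : Set (Fin m →₀ ℕ)}
    {d : Fin (n + m + 1) →₀ ℕ} {s : Fin n →₀ ℕ} {t : Fin m →₀ ℕ} {k : ℕ}
    (hd : ⇑d = joinVec (⇑s, ⇑t, k)) :
    d ∈ joinExps S T ↔ (k = 0 ∧ t = 0 ∧ s ∈ S) ∨ (k = 1 ∧ s = 0 ∧ t ∈ T) := by
  simp only [joinExps, Set.mem_union, Set.mem_image, ← DFunLike.coe_fn_eq (g := d), hd,
    coe_mapDomain_joinInl, coe_single_last_add_mapDomain_joinInr, joinVec.apply_eq_iff_eq,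
    Prod.mk.injEq, DFunLike.coe_fn_eq]
  grind [DFunLike.coe_fn_eq, Finsupp.coe_zero]

theorem joinExps_nonempty {S : Set (Fin n →₀ ℕ)} (hS : S.Nonempty) (T : Set (Fin m →₀ ℕ)) :
    (joinExps S T).Nonempty :=
  (hS.image _).inl

end Exponents

section Polytope

variable {n m : ℕ} {P : Set (Fin n → ℝ)} {Q : Set (Fin m → ℝ)}

theorem joinEmb₁_eq_joinVec (x : Fin n → ℝ) : joinEmb₁ n m x = joinVec (x, 0, 0) := by
  simp [eq_joinVec_iff, joinEmb₁, joinInl, joinInr]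

theorem joinEmb₂_eq_joinVec (y : Fin m → ℝ) : joinEmb₂ n m y = joinVec (0, y, 1) := by
  simp [eq_joinVec_iff, joinEmb₂, joinInl, joinInr]

theorem convex_image_joinEmb₁ (hP : Convex ℝ P) : Convex ℝ (joinEmb₁ n m '' P) := by
  rintro _ ⟨x, hx, rfl⟩ _ ⟨y, hy, rfl⟩ a b ha hb hab
  refine ⟨_, hP hx hy ha hb hab, ?_⟩
  simp [joinEmb₁_eq_joinVec, smul_joinVec_add_smul_joinVec]

theorem convex_image_joinEmb₂ (hQ : Convex ℝ Q) : Convex ℝ (joinEmb₂ n m '' Q) := by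
  rintro _ ⟨x, hx, rfl⟩ _ ⟨y, hy, rfl⟩ a b ha hb hab
  refine ⟨_, hQ hx hy ha hb hab, ?_⟩
  simp [joinEmb₂_eq_joinVec, smul_joinVec_add_smul_joinVec, hab]

theorem joinVec_mem_joinPolytope_iff (hP : Convex ℝ P) (hQ : Convex ℝ Q) (hPn : P.Nonempty)
    (hQn : Q.Nonempty) {u : Fin n → ℝ} {v : Fin m → ℝ} {c : ℝ} :
    joinVec (u, v, c) ∈ joinPolytope P Q ↔
      0 ≤ c ∧ c ≤ 1 ∧ (∃ x ∈ P, (1 - c) • x = u) ∧ ∃ y ∈ Q, c • y = v := by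
  rw [joinPolytope, (convex_image_joinEmb₁ hP).convexHull_union (convex_image_joinEmb₂ hQ)
    (hPn.image _) (hQn.image _)]
  simp only [mem_convexJoin, Set.exists_mem_image, joinEmb₁_eq_joinVec, joinEmb₂_eq_joinVec,
    segment, Set.mem_ofPred_eq, smul_joinVec_add_smul_joinVec, joinVec.apply_eq_iff_eq]
  constructor
  · rintro ⟨x, hx, y, hy, a, b, ha, hb, hab, h⟩
    obtain ⟨hu, hv, hc⟩ : a • x = u ∧ b • y = v ∧ b = c := by simpa using h
    subst hc
    exact ⟨hb, by linarith, ⟨x, hx, by rw [← hab, add_sub_cancel_right, hu]⟩, y, hy, hv⟩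
  · rintro ⟨hc₀, hc₁, ⟨x, hx, rfl⟩, y, hy, rfl⟩
    exact ⟨x, hx, y, hy, 1 - c, c, by linarith, hc₀, by ring, by simp⟩

theorem joinVec_natCast_mem_joinPolytope_iff (hP : Convex ℝ P) (hQ : Convex ℝ Q)
    (hPn : P.Nonempty) (hQn : Q.Nonempty) {u : Fin n → ℝ} {v : Fin m → ℝ} {k : ℕ} :
    joinVec (u, v, (k : ℝ)) ∈ joinPolytope P Q ↔
      (k = 0 ∧ v = 0 ∧ u ∈ P) ∨ (k = 1 ∧ u = 0 ∧ v ∈ Q) := by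
  rw [joinVec_mem_joinPolytope_iff hP hQ hPn hQn]
  rcases k with _ | _ | k
  · have hQ' : ∃ y, y ∈ Q := hQn
    simp [hQ', eq_comm (a := v), and_comm]
  · have hP' : ∃ x, x ∈ P := hPn
    simp [hP', eq_comm (a := u)]
  · have hk : ¬ ((k + 1 + 1 : ℕ) : ℝ) ≤ 1 := by rw [Nat.cast_le_one]; omega
    simp [-Nat.cast_add, hk]

theorem latticeExps_joinPolytope (hP : Convex ℝ P) (hQ : Convex ℝ Q) (hPn : P.Nonempty)
    (hQn : Q.Nonempty) :
    latticeExps (joinPolytope P Q) = joinExps (latticeExps P) (latticeExps Q) := by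
  ext d
  obtain ⟨s, t, k, hd⟩ := exists_coe_eq_joinVec d
  have hcast : (fun i => (d i : ℝ)) =
      joinVec (fun i => (s i : ℝ), fun j => (t j : ℝ), (k : ℝ)) := by
    rw [hd]; exact comp_joinVec (Nat.cast : ℕ → ℝ) _ _ _
  rw [mem_joinExps_iff hd, latticeExps, Set.mem_ofPred_eq, hcast,
    joinVec_natCast_mem_joinPolytope_iff hP hQ hPn hQn]
  simp [latticeExps, funext_iff, Finsupp.ext_iff]

theorem IsIntegralPolytope.convex (hP : IsIntegralPolytope P) : Convex ℝ P := by
  obtain ⟨V, -, rfl⟩ := hP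
  exact convex_convexHull ℝ _

theorem IsIntegralPolytope.latticeExps_nonempty (hP : IsIntegralPolytope P)
    (hnonneg : ∀ x ∈ P, 0 ≤ x) : (latticeExps P).Nonempty := by
  obtain ⟨V, ⟨v, hv⟩, rfl⟩ := hP
  have hvP := subset_convexHull ℝ _ (Set.mem_image_of_mem (fun v i => (v i : ℝ)) hv)
  refine ⟨Finsupp.equivFunOnFinite.symm fun i => (v i).toNat, ?_⟩
  rw [latticeExps, Set.mem_ofPred_eq]
  convert hvP using 2 with i
  have hvi : (0 : ℝ) ≤ v i := hnonneg _ hvP i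
  exact_mod_cast Int.toNat_of_nonneg (Int.cast_nonneg_iff.1 hvi)

theorem nonempty_of_latticeExps_nonempty (h : (latticeExps P).Nonempty) : P.Nonempty :=
  h.imp' _ fun _ => id

end Polytope

section RestrictSupport

variable {σ τ R : Type*} [CommSemiring R]

theorem restrictSupport_union (s t : Set (σ →₀ ℕ)) :
    restrictSupport R (s ∪ t) = restrictSupport R s ⊔ restrictSupport R t := by
  simp only [restrictSupport_eq_span, Set.image_union, Submodule.span_union]

theorem map_rename_restrictSupport (f : σ → τ) (s : Set (σ →₀ ℕ)) :
    (restrictSupport R s).map (rename f).toLinearMap =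
      restrictSupport R (Finsupp.mapDomain f '' s) := by
  simp only [restrictSupport_eq_span, Submodule.map_span, Set.image_image, AlgHom.toLinearMap_apply,
    rename_monomial]

theorem map_mulLeft_monomial_restrictSupport (d : σ →₀ ℕ) (s : Set (σ →₀ ℕ)) :
    (restrictSupport R s).map (LinearMap.mulLeft R (monomial d 1)) =
      restrictSupport R ((d + ·) '' s) := by
  simp only [restrictSupport_eq_span, Submodule.map_span, Set.image_image,
    LinearMap.mulLeft_apply, monomial_mul, one_mul]

end RestrictSupport

section JoinPoly

variable {R A : Type*} [CommSemiring R] [CommSemiring A] [Algebra R A] {n m : ℕ}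

/-- The polynomial `g(x) + z h(y)`, the general form of a polynomial supported on the lattice points
of a join. -/
noncomputable def joinPoly (g : MvPolynomial (Fin n) R) (h : MvPolynomial (Fin m) R) :
    MvPolynomial (Fin (n + m + 1)) R :=
  rename (joinInl n m) g + X (Fin.last _) * rename (joinInr n m) h

theorem aeval_joinPoly (x : Fin n → A) (y : Fin m → A) (z : A) (g : MvPolynomial (Fin n) R)
    (h : MvPolynomial (Fin m) R) :
    aeval (joinVec (x, y, z)) (joinPoly g h) = aeval x g + z * aeval y h := by
  simp [joinPoly, aeval_rename, Function.comp_def]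

theorem joinPoly_eq_zero_iff {g : MvPolynomial (Fin n) R} {h : MvPolynomial (Fin m) R} :
    joinPoly g h = 0 ↔ g = 0 ∧ h = 0 := by
  refine ⟨fun h₀ => ?_, by rintro ⟨rfl, rfl⟩; simp [joinPoly]⟩
  have hg : g = 0 := by
    have hX := aeval_joinPoly (X : Fin n → MvPolynomial (Fin n) R) (0 : Fin m → _) 0 g h
    rw [h₀] at hX
    simpa using hX.symm
  have hh : h = 0 := by
    have hX := aeval_joinPoly (0 : Fin n → _) (X : Fin m → MvPolynomial (Fin m) R) 1 g h
    rw [h₀, hg] at hX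
    simpa using hX.symm
  exact ⟨hg, hh⟩

theorem mem_restrictSupport_joinExps_iff {S : Set (Fin n →₀ ℕ)} {T : Set (Fin m →₀ ℕ)}
    {f : MvPolynomial (Fin (n + m + 1)) R} :
    f ∈ restrictSupport R (joinExps S T) ↔
      ∃ g ∈ restrictSupport R S, ∃ h ∈ restrictSupport R T, joinPoly g h = f := by
  have hT : restrictSupport R
      ((fun t => Finsupp.single (Fin.last (n + m)) 1 + Finsupp.mapDomain (joinInr n m) t) '' T) =
      ((restrictSupport R T).map (rename (joinInr n m)).toLinearMap).map
        (LinearMap.mulLeft R (X (Fin.last _))) := by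
    rw [map_rename_restrictSupport, X, map_mulLeft_monomial_restrictSupport, Set.image_image]
  rw [joinExps, restrictSupport_union, hT, ← map_rename_restrictSupport, Submodule.mem_sup]
  simp [joinPoly]

end JoinPoly

theorem card_sub_one_pos (α : Type*) [Fintype α] [Nontrivial α] : 0 < (Fintype.card α : ℝ) - 1 :=
  sub_pos.2 (by exact_mod_cast Fintype.one_lt_card)

theorem ncard_compl_singleton {α : Type*} [Fintype α] (a : α) :
    ({a}ᶜ : Set α).ncard = Fintype.card α - 1 := by
  rw [Set.ncard_compl, Set.ncard_singleton, Nat.card_eq_fintype_card]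

section Torus

variable {K : Type} [Field K] {n m : ℕ}

/-- The torus `(Kˣ)^n`, as a set of vectors. -/
def torus (K : Type) [Field K] (n : ℕ) : Set (Fin n → K) := {a | ∀ i, a i ≠ 0}

theorem torusZeros_subset_torus (f : MvPolynomial (Fin n) K) : torusZeros f ⊆ torus K n :=
  fun _ ha => ha.1

theorem mem_torusZeros_iff {f : MvPolynomial (Fin n) K} {a : Fin n → K} :
    a ∈ torusZeros f ↔ a ∈ torus K n ∧ eval a f = 0 :=
  Iff.rfl

theorem joinVec_mem_torus_iff {x : Fin n → K} {y : Fin m → K} {z : K} :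
    joinVec (x, y, z) ∈ torus K (n + m + 1) ↔ x ∈ torus K n ∧ y ∈ torus K m ∧ z ≠ 0 := by
  simp only [torus, Set.mem_ofPred_eq, forall_fin_join, joinVec_joinInl, joinVec_joinInr,
    joinVec_last]

theorem joinVec_mem_torusZeros_joinPoly_iff {g : MvPolynomial (Fin n) K}
    {h : MvPolynomial (Fin m) K} {x : Fin n → K} {y : Fin m → K} {z : K} :
    joinVec (x, y, z) ∈ torusZeros (joinPoly g h) ↔
      (x ∈ torus K n ∧ y ∈ torus K m ∧ z ≠ 0) ∧ eval x g + z * eval y h = 0 := by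
  rw [mem_torusZeros_iff, joinVec_mem_torus_iff, ← aeval_eq_eval, aeval_joinPoly, aeval_eq_eval,
    aeval_eq_eval]

theorem joinVec_preimage_torusZeros_joinPoly (g : MvPolynomial (Fin n) K)
    (h : MvPolynomial (Fin m) K) :
    joinVec ⁻¹' torusZeros (joinPoly g h) =
      torusZeros g ×ˢ torusZeros h ×ˢ {0}ᶜ ∪
        (fun p => (p.1, p.2, -eval p.1 g / eval p.2 h)) ''
          ((torus K n \ torusZeros g) ×ˢ (torus K m \ torusZeros h)) := by
  ext ⟨x, y, z⟩
  rw [Set.mem_preimage, joinVec_mem_torusZeros_joinPoly_iff]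
  simp only [Set.mem_union, Set.mem_prod, Set.mem_image, Set.mem_sdiff, mem_torusZeros_iff,
    Set.mem_compl_iff, Set.mem_singleton_iff, Prod.exists, Prod.mk.injEq]
  constructor
  · rintro ⟨⟨hx, hy, hz⟩, hxyz⟩
    by_cases hh : eval y h = 0
    · left
      simp_all
    · right
      have hg : eval x g ≠ 0 := fun hg => by simp_all
      refine ⟨x, y, by simp_all, rfl, rfl, ?_⟩
      rw [div_eq_iff hh]
      linear_combination -hxyz
  · rintro (⟨⟨hx, hg⟩, ⟨hy, hh⟩, hz⟩ | ⟨x, y, ⟨⟨hx, hg⟩, hy, hh⟩, rfl, rfl, rfl⟩)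
    · simp_all
    · have hg' : eval x g ≠ 0 := fun hg₀ => hg ⟨hx, hg₀⟩
      have hh' : eval y h ≠ 0 := fun hh₀ => hh ⟨hy, hh₀⟩
      refine ⟨⟨hx, hy, div_ne_zero (neg_ne_zero.2 hg') hh'⟩, ?_⟩
      rw [div_mul_cancel₀ _ hh', add_neg_cancel]

theorem isGreatest_maxTorusZeros [Finite K] {S : Set (Fin n →₀ ℕ)} (hS : S.Nonempty) :
    IsGreatest ((fun f => (torusZeros f).ncard) ''
        ((restrictSupport K S : Set (MvPolynomial (Fin n) K)) \ {0}))
      (maxTorusZeros K S) := by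
  have hset : {z | ∃ f : MvPolynomial (Fin n) K, f ≠ 0 ∧ (f.support : Set (Fin n →₀ ℕ)) ⊆ S ∧
      z = (torusZeros f).ncard} = (fun f => (torusZeros f).ncard) ''
        ((restrictSupport K S : Set (MvPolynomial (Fin n) K)) \ {0}) := by
    ext z
    simp [mem_restrictSupport_iff, and_assoc, and_left_comm, eq_comm]
  have hbdd (A : Set (MvPolynomial (Fin n) K)) :
      BddAbove ((fun f => (torusZeros f).ncard) '' A) :=
    ⟨(torus K n).ncard, Set.forall_mem_image.2 fun f _ =>
      Set.ncard_le_ncard (torusZeros_subset_torus f)⟩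
  obtain ⟨s, hs⟩ := hS
  have hmono : monomial s (1 : K) ∈ (restrictSupport K S : Set (MvPolynomial (Fin n) K)) \ {0} :=
    ⟨(monomial_mem_restrictSupport K).2 (.inl hs), by simp⟩
  rw [maxTorusZeros, hset]
  exact ⟨Nat.sSup_mem ⟨_, _, hmono, rfl⟩ (hbdd _), fun _ => le_csSup (hbdd _)⟩

variable [Fintype K]

theorem ncard_torus : (torus K n).ncard = (Fintype.card K - 1) ^ n := by
  classical
  have h : torus K n = Fintype.piFinset fun _ : Fin n => Finset.univ.erase (0 : K) := by
    ext
    simp [torus]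
  rw [h, Set.ncard_coe_finset]
  simp [Finset.card_erase_of_mem]

theorem cast_ncard_torus : ((torus K n).ncard : ℝ) = ((Fintype.card K : ℝ) - 1) ^ n := by
  rw [ncard_torus, Nat.cast_pow, Nat.cast_pred Fintype.card_pos]

theorem ncard_torusZeros_joinPoly (g : MvPolynomial (Fin n) K) (h : MvPolynomial (Fin m) K) :
    (torusZeros (joinPoly g h)).ncard =
      (torusZeros g).ncard * ((torusZeros h).ncard * (Fintype.card K - 1)) +
        (torus K n \ torusZeros g).ncard * (torus K m \ torusZeros h).ncard := by
  have hgraph : Function.Injective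
      fun p : (Fin n → K) × (Fin m → K) => (p.1, p.2, -eval p.1 g / eval p.2 h) :=
    fun p p' hp => by grind
  have hdisj : Disjoint (torusZeros g ×ˢ torusZeros h ×ˢ ({0}ᶜ : Set K))
      ((fun p => (p.1, p.2, -eval p.1 g / eval p.2 h)) ''
        ((torus K n \ torusZeros g) ×ˢ (torus K m \ torusZeros h))) := by
    rw [Set.disjoint_right]
    rintro _ ⟨p, hp, rfl⟩ hp'
    exact hp.1.2 hp'.1
  rw [← Set.ncard_preimage_of_injective_subset_range joinVec.injective (by simp),
    joinVec_preimage_torusZeros_joinPoly, Set.ncard_union_eq hdisj,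
    Set.ncard_image_of_injective _ hgraph]
  simp only [Set.ncard_prod, ncard_compl_singleton]

/-- The proportion of the points of the torus at which `f` does not vanish, i.e. the relative
Hamming weight of the codeword of `f` in a toric code. -/
noncomputable def torusWeight (f : MvPolynomial (Fin n) K) : ℝ :=
  1 - (torusZeros f).ncard / ((Fintype.card K : ℝ) - 1) ^ n

theorem cast_ncard_torusZeros (f : MvPolynomial (Fin n) K) :
    ((torusZeros f).ncard : ℝ) = (1 - torusWeight f) * ((Fintype.card K : ℝ) - 1) ^ n := by
  rw [torusWeight, sub_sub_cancel, div_mul_cancel₀ _ (pow_pos (card_sub_one_pos K) n).ne']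

theorem cast_ncard_torus_sdiff_torusZeros (f : MvPolynomial (Fin n) K) :
    ((torus K n \ torusZeros f).ncard : ℝ) =
      torusWeight f * ((Fintype.card K : ℝ) - 1) ^ n := by
  rw [Set.ncard_sdiff (torusZeros_subset_torus f),
    Nat.cast_sub (Set.ncard_le_ncard (torusZeros_subset_torus f)), cast_ncard_torus,
    cast_ncard_torusZeros]
  ring

theorem torusWeight_zero : torusWeight (0 : MvPolynomial (Fin n) K) = 0 := by
  have h : torusZeros (0 : MvPolynomial (Fin n) K) = torus K n := by
    ext
    simp [mem_torusZeros_iff]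
  rw [torusWeight, h, cast_ncard_torus, div_self (pow_pos (card_sub_one_pos K) n).ne', sub_self]

theorem torusWeight_le_one (f : MvPolynomial (Fin n) K) : torusWeight f ≤ 1 :=
  sub_le_self _ (div_nonneg (Nat.cast_nonneg _) (pow_pos (card_sub_one_pos K) n).le)

theorem torusWeight_joinPoly (g : MvPolynomial (Fin n) K) (h : MvPolynomial (Fin m) K) :
    torusWeight (joinPoly g h) = torusWeight g + torusWeight h -
      torusWeight g * torusWeight h * (Fintype.card K / ((Fintype.card K : ℝ) - 1)) := by
  have hq := card_sub_one_pos K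
  have hcount := congrArg (Nat.cast (R := ℝ)) (ncard_torusZeros_joinPoly g h)
  push_cast [Nat.cast_pred Fintype.card_pos, cast_ncard_torusZeros,
    cast_ncard_torus_sdiff_torusZeros] at hcount
  obtain ⟨r, hr⟩ : ∃ r : ℝ, Fintype.card K = r + 1 := ⟨_, (sub_add_cancel _ 1).symm⟩
  rw [hr, add_sub_cancel_right] at hq hcount ⊢
  rw [pow_succ, pow_add] at hcount
  field_simp at hcount ⊢
  linear_combination -hcount

end Torus

/-- `2 - c` is the value of `a + b - a * b * c` at `a = b = 1`. -/
theorem min_le_add_sub_mul {a₀ a b₀ b c : ℝ} (hc : 1 ≤ c) (ha₀ : a₀ ≤ a) (ha : a ≤ 1) (hb₀ : b₀ ≤ b)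
    (hb : b ≤ 1) (h : min a₀ b₀ ≤ 2 - c) :
    min (min a₀ b₀) (a₀ + b₀ - a₀ * b₀ * c) ≤ a + b - a * b * c := by
  wlog hab : a₀ ≤ b₀ generalizing a₀ a b₀ b
  · have := this hb₀ hb ha₀ ha (by rwa [min_comm]) (le_of_not_ge hab)
    rwa [min_comm b₀, add_comm b₀, mul_comm b₀, add_comm b, mul_comm b] at this
  rw [min_eq_left hab] at h ⊢
  have ha₀c : a₀ * c ≤ 1 := by nlinarith [sq_nonneg (c - 1)]
  rcases le_total (b * c) 1 with hbc | hbc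
  · refine min_le_of_right_le ?_
    calc a₀ + b₀ - a₀ * b₀ * c = a₀ + b₀ * (1 - a₀ * c) := by ring
      _ ≤ a₀ + b * (1 - a₀ * c) := by gcongr
      _ = b + a₀ * (1 - b * c) := by ring
      _ ≤ b + a * (1 - b * c) := by gcongr
      _ = a + b - a * b * c := by ring
  · refine min_le_of_left_le ?_
    calc a₀ ≤ 1 + 1 * (1 - c) := by linarith
      _ ≤ 1 + b * (1 - c) := by linarith [mul_le_mul_of_nonpos_right hb (sub_nonpos.2 hc)]
      _ = b + 1 * (1 - b * c) := by ring
      _ ≤ b + a * (1 - b * c) := by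
        linarith [mul_le_mul_of_nonpos_right ha (sub_nonpos.2 hbc)]
      _ = a + b - a * b * c := by ring

section RelMinDist

variable (K : Type) [Field K] [Fintype K] {n m : ℕ}

/-- The relative minimum distance of the generalized toric code with exponent set `S`, for an
arbitrary `S` in place of the lattice points of a polytope. -/
noncomputable def relMinDist (S : Set (Fin n →₀ ℕ)) : ℝ :=
  1 - maxTorusZeros K S / ((Fintype.card K : ℝ) - 1) ^ n

theorem deltaP_eq_relMinDist (P : Set (Fin n → ℝ)) :
    deltaP K P = relMinDist K (latticeExps P) := by
  rw [deltaP, sub_div, div_self (pow_pos (card_sub_one_pos K) n).ne']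
  rfl

theorem isLeast_relMinDist {S : Set (Fin n →₀ ℕ)} (hS : S.Nonempty) :
    IsLeast (torusWeight '' ((restrictSupport K S : Set (MvPolynomial (Fin n) K)) \ {0}))
      (relMinDist K S) := by
  obtain ⟨⟨f, hf, hfmax⟩, hmax⟩ := isGreatest_maxTorusZeros (K := K) hS
  refine ⟨⟨f, hf, by rw [relMinDist, ← hfmax]; rfl⟩, ?_⟩
  rintro _ ⟨f, hf, rfl⟩
  have hq := card_sub_one_pos K
  have := hmax ⟨f, hf, rfl⟩
  simp only [relMinDist, torusWeight]
  gcongr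

variable {K} {S : Set (Fin n →₀ ℕ)} {T : Set (Fin m →₀ ℕ)}

theorem relMinDist_joinExps_le (hS : S.Nonempty) (hT : T.Nonempty) :
    relMinDist K (joinExps S T) ≤ min (min (relMinDist K S) (relMinDist K T))
      (relMinDist K S + relMinDist K T -
        relMinDist K S * relMinDist K T * (Fintype.card K / ((Fintype.card K : ℝ) - 1))) := by
  have hle {g : MvPolynomial (Fin n) K} {h : MvPolynomial (Fin m) K} (hg : g ∈ restrictSupport K S)
      (hh : h ∈ restrictSupport K T) (hgh : ¬(g = 0 ∧ h = 0)) :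
      relMinDist K (joinExps S T) ≤ torusWeight g + torusWeight h -
        torusWeight g * torusWeight h * (Fintype.card K / ((Fintype.card K : ℝ) - 1)) := by
    rw [← torusWeight_joinPoly]
    exact (isLeast_relMinDist K (joinExps_nonempty hS T)).2
      ⟨_, ⟨mem_restrictSupport_joinExps_iff.2 ⟨g, hg, h, hh, rfl⟩, joinPoly_eq_zero_iff.not.2 hgh⟩,
        rfl⟩
  obtain ⟨g, ⟨hg, hg₀⟩, hgS⟩ := (isLeast_relMinDist K hS).1
  obtain ⟨h, ⟨hh, hh₀⟩, hhT⟩ := (isLeast_relMinDist K hT).1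
  rw [← hgS, ← hhT]
  refine le_min (le_min ?_ ?_) (hle hg hh fun h' => hg₀ h'.1)
  · simpa [torusWeight_zero] using hle hg (zero_mem _) fun h' => hg₀ h'.1
  · simpa [torusWeight_zero] using hle (zero_mem _) hh fun h' => hh₀ h'.2

theorem le_relMinDist_joinExps (hS : S.Nonempty) (hT : T.Nonempty)
    (hST : min (relMinDist K S) (relMinDist K T) ≤
      2 - Fintype.card K / ((Fintype.card K : ℝ) - 1)) :
    min (min (relMinDist K S) (relMinDist K T))
      (relMinDist K S + relMinDist K T -
        relMinDist K S * relMinDist K T * (Fintype.card K / ((Fintype.card K : ℝ) - 1))) ≤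
      relMinDist K (joinExps S T) := by
  obtain ⟨f, ⟨hf, hf₀⟩, hfST⟩ := (isLeast_relMinDist K (joinExps_nonempty hS T)).1
  obtain ⟨g, hg, h, hh, rfl⟩ := mem_restrictSupport_joinExps_iff.1 hf
  have hgS (hg₀ : g ≠ 0) : relMinDist K S ≤ torusWeight g :=
    (isLeast_relMinDist K hS).2 ⟨g, ⟨hg, hg₀⟩, rfl⟩
  have hhT (hh₀ : h ≠ 0) : relMinDist K T ≤ torusWeight h :=
    (isLeast_relMinDist K hT).2 ⟨h, ⟨hh, hh₀⟩, rfl⟩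
  rw [← hfST, torusWeight_joinPoly]
  by_cases hg₀ : g = 0
  · have hh₀ : h ≠ 0 := fun hh₀ => hf₀ (joinPoly_eq_zero_iff.2 ⟨hg₀, hh₀⟩)
    simpa [hg₀, torusWeight_zero] using .inl (.inr (hhT hh₀))
  by_cases hh₀ : h = 0
  · simpa [hh₀, torusWeight_zero] using .inl (.inl (hgS hg₀))
  · have hc : 1 ≤ Fintype.card K / ((Fintype.card K : ℝ) - 1) :=
      (one_le_div (card_sub_one_pos K)).2 (sub_le_self _ zero_le_one)
    exact min_le_add_sub_mul hc (hgS hg₀) (torusWeight_le_one g) (hhT hh₀)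
      (torusWeight_le_one h) hST

theorem deltaP_le_of_le_NP {P : Set (Fin n → ℝ)}
    (hP : 2 * ((Fintype.card K : ℝ) - 1) ^ n / Fintype.card K ≤ NP K P) :
    deltaP K P ≤ 2 - Fintype.card K / ((Fintype.card K : ℝ) - 1) := by
  have hq : (2 : ℝ) ≤ Fintype.card K := by exact_mod_cast Fintype.one_lt_card (α := K)
  have hr := card_sub_one_pos K
  have hzeros : 2 / (Fintype.card K : ℝ) ≤ NP K P / ((Fintype.card K : ℝ) - 1) ^ n := by
    rwa [le_div_iff₀ (pow_pos hr n), div_mul_eq_mul_div]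
  have hcard : Fintype.card K / ((Fintype.card K : ℝ) - 1) ≤ 1 + 2 / Fintype.card K := by
    rw [div_le_iff₀ hr]
    field_simp
    nlinarith
  rw [deltaP, sub_div, div_self (pow_pos hr n).ne']
  linarith

end RelMinDist

theorem stmt9_general (K : Type) [Field K] [Fintype K] (n m : ℕ) (P : Set (Fin n → ℝ))
    (Q : Set (Fin m → ℝ)) (hP : Convex ℝ P) (hQ : Convex ℝ Q) (hPne : (latticeExps P).Nonempty)
    (hQne : (latticeExps Q).Nonempty)
    (hPQ : min (deltaP K P) (deltaP K Q) ≤ 2 - Fintype.card K / ((Fintype.card K : ℝ) - 1)) :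
    deltaP K (joinPolytope P Q)
      = min (min (deltaP K P) (deltaP K Q))
          (deltaP K P + deltaP K Q
            - deltaP K P * deltaP K Q * (Fintype.card K / ((Fintype.card K : ℝ) - 1))) := by
  simp only [deltaP_eq_relMinDist, latticeExps_joinPolytope hP hQ
    (nonempty_of_latticeExps_nonempty hPne) (nonempty_of_latticeExps_nonempty hQne)] at hPQ ⊢
  exact (relMinDist_joinExps_le hPne hQne).antisymm (le_relMinDist_joinExps hPne hQne hPQ)

/-- If `N(P) ≥ 2(q-1)^n/q` and `N(Q) ≥ 2(q-1)^m/q` then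
`δ(P*Q) = min{δ(P), δ(Q), δ(P) + δ(Q) - δ(P)δ(Q)·q/(q-1)}`. -/
theorem stmt9 (K : Type) [Field K] [Fintype K] (q : ℕ) (hq : Fintype.card K = q)
    (n m : ℕ) (P : Set (Fin n → ℝ)) (Q : Set (Fin m → ℝ))
    (hP : IsIntegralPolytope P) (hQ : IsIntegralPolytope Q)
    (hPbox : InBox q P) (hQbox : InBox q Q)
    (hNP : 2 * ((q : ℝ) - 1) ^ n / q ≤ (NP K P : ℝ))
    (hNQ : 2 * ((q : ℝ) - 1) ^ m / q ≤ (NP K Q : ℝ)) :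
    deltaP K (joinPolytope P Q)
      = min (min (deltaP K P) (deltaP K Q))
          (deltaP K P + deltaP K Q
            - deltaP K P * deltaP K Q * ((q : ℝ) / ((q : ℝ) - 1))) := by
  subst hq
  exact stmt9_general K n m P Q hP.convex hQ.convex
    (hP.latticeExps_nonempty fun x hx i => (hPbox x hx i).1)
    (hQ.latticeExps_nonempty fun x hx i => (hQbox x hx i).1)
    (min_le_of_left_le (deltaP_le_of_le_NP hNP))
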